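/- arXiv:1806.11422 — 3 statements merged into one kernel-verified Lean document; each statement's English description precedes it below -/
import Mathlib

section
/- Let x > 0. The uncertain transfer function value T(θ) = (e + Z_N·θ)/(1 + Z_D·θ) is {x,y,z}-dissipative (i.e. x|T(θ)|² + 2Re(conj(y)·T(θ)) + z ≤ 0) for every θ in the ellipsoid U if and only if there exist a real scalar ξ ≥ 0 and a real skew-symmetric matrix 𝒳 ∈ ℝ^{(n+1)×(n+1)} such that the Hermitian (n+2)×(n+2) complex matrix [[−α, λ],[λ*, −A₁ − ξB + i𝒳]] is negative semidefinite, where λ = [Z_N + (y/x)Z_D , e + y/x] ∈ ℂ^{1×(n+1)} and α = |y|²/x² − z/x. -/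
open Matrix
open scoped ComplexOrder

/-- A complex number `Δ` is `{x,y,z}`-dissipative if `x|Δ|² + 2Re(conj(y)·Δ) + z ≤ 0`. -/
def Dissipative (x : ℝ) (y : ℂ) (z : ℝ) (Δ : ℂ) : Prop :=
  x * Complex.normSq Δ + 2 * (starRingEnd ℂ y * Δ).re + z ≤ 0

/-- The transfer function value `T(θ) = (e + Z_N·θ)/(1 + Z_D·θ)`. -/
noncomputable def Tval {n : ℕ} (e : ℂ) (ZN ZD : Fin n → ℂ) (θ : Fin n → ℝ) : ℂ :=
  (e + ∑ i, ZN i * (θ i : ℂ)) / (1 + ∑ i, ZD i * (θ i : ℂ))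

/-- The ellipsoid `U = {θ ∈ ℝⁿ : (θ−θ̂)ᵀP⁻¹(θ−θ̂) < χ}`. -/
noncomputable def ellipsoid {n : ℕ} (P : Matrix (Fin n) (Fin n) ℝ) (θhat : Fin n → ℝ)
    (χ : ℝ) : Set (Fin n → ℝ) :=
  {θ | (θ - θhat) ⬝ᵥ P⁻¹ *ᵥ (θ - θhat) < χ}

/-- The Hermitian matrix `A₁ = [[Z_D*Z_D, Z_D*],[Z_D, 1]] ∈ ℂ^{(n+1)×(n+1)}`. -/
def A1mat {n : ℕ} (ZD : Fin n → ℂ) : Matrix (Fin n ⊕ Unit) (Fin n ⊕ Unit) ℂ :=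
  Matrix.fromBlocks
    (Matrix.of fun i j => starRingEnd ℂ (ZD i) * ZD j)
    (Matrix.of fun i _ => starRingEnd ℂ (ZD i))
    (Matrix.of fun _ j => ZD j)
    (Matrix.of fun _ _ => 1)

/-- The real symmetric matrix `B = [[P⁻¹, −P⁻¹θ̂],[−θ̂ᵀP⁻¹, θ̂ᵀP⁻¹θ̂ − χ]]`. -/
noncomputable def Bmat {n : ℕ} (P : Matrix (Fin n) (Fin n) ℝ) (θhat : Fin n → ℝ) (χ : ℝ) :
    Matrix (Fin n ⊕ Unit) (Fin n ⊕ Unit) ℝ :=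
  Matrix.fromBlocks P⁻¹
    (Matrix.of fun i _ => -(P⁻¹ *ᵥ θhat) i)
    (Matrix.of fun _ j => -(θhat ᵥ* P⁻¹) j)
    (Matrix.of fun _ _ => θhat ⬝ᵥ P⁻¹ *ᵥ θhat - χ)

/-- The row vector `λ = [Z_N + (y/x)Z_D , e + y/x] ∈ ℂ^{1×(n+1)}`. -/
noncomputable def lamVec {n : ℕ} (e : ℂ) (ZN ZD : Fin n → ℂ) (x : ℝ) (y : ℂ) :
    Fin n ⊕ Unit → ℂ :=
  Sum.elim (fun i => ZN i + (y / (x : ℂ)) * ZD i) (fun _ => e + y / (x : ℂ))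

/-- The Hermitian `(n+2)×(n+2)` matrix `[[−α, λ],[λ*, −A₁ − ξB + i𝒳]]`. -/
noncomputable def bigMat {n : ℕ} (e : ℂ) (ZN ZD : Fin n → ℂ)
    (P : Matrix (Fin n) (Fin n) ℝ) (θhat : Fin n → ℝ) (χ : ℝ)
    (x : ℝ) (y : ℂ) (z : ℝ) (ξ : ℝ) (X : Matrix (Fin n ⊕ Unit) (Fin n ⊕ Unit) ℝ) :
    Matrix (Unit ⊕ (Fin n ⊕ Unit)) (Unit ⊕ (Fin n ⊕ Unit)) ℂ :=
  Matrix.fromBlocks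
    (Matrix.of fun _ _ => -((Complex.normSq y / x ^ 2 - z / x : ℝ) : ℂ))
    (Matrix.of fun _ j => lamVec e ZN ZD x y j)
    (Matrix.of fun i _ => starRingEnd ℂ (lamVec e ZN ZD x y i))
    (-(A1mat ZD) - (ξ : ℂ) • (Bmat P θhat χ).map (fun b => (b : ℂ)) +
      Complex.I • X.map (fun b => (b : ℂ)))

/-!
Completing the square turns dissipativity of `T(θ)` into `‖λ·(θ, 1)‖² ≤ α‖d·(θ, 1)‖²` with
`d = [Z_D, 1]`, and this holds exactly when `α‖c‖² - 2 Re(c̄ λ·(θ, 1)) + ‖d·(θ, 1)‖²` is nonnegative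
for every `c ∈ ℂ`. Homogenizing `(θ, 1)` to `v ∈ ℝⁿ⁺¹` gives one quadratic form on `ℂ × ℝⁿ⁺¹` which
is nonnegative wherever the form of `B` is negative, and the S-lemma produces the multiplier `ξ`.

The resulting inequality tests a Hermitian matrix on `ℂ × ℝⁿ⁺¹` only. Adding `i𝒳` leaves these
values unchanged, and `𝒳` can be chosen to cancel the imaginary part of the Schur complement of `α`.
A real positive semidefinite Schur complement remains, so positivity extends to `ℂⁿ⁺²`.
-/

section SLemma

theorem quadraticForm_apply_add_smul {R M : Type*} [CommRing R] [AddCommGroup M] [Module R M]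
    (Q : QuadraticForm R M) (u v : M) (t : R) :
    Q (u + t • v) = Q u + t * QuadraticMap.polar Q u v + t ^ 2 * Q v := by
  rw [QuadraticMap.map_add Q, QuadraticMap.map_smul, QuadraticMap.polar_smul_right, smul_eq_mul,
    smul_eq_mul]
  ring

variable {V : Type*} [AddCommGroup V] [Module ℝ V] {F Q : QuadraticForm ℝ V}

-- A zero `v` of `Q` is a limit of points `v ± t • v₀` at which `Q` is negative.
theorem quadraticForm_nonneg_of_eq_zero {v₀ v : V} (hv₀ : Q v₀ < 0)
    (h : ∀ w, Q w < 0 → 0 ≤ F w) (hv : Q v = 0) : 0 ≤ F v := by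
  wlog hpolar : QuadraticMap.polar Q v v₀ ≤ 0 generalizing v
  · rw [← QuadraticMap.map_neg]
    refine this (by rwa [QuadraticMap.map_neg]) ?_
    rw [QuadraticMap.polar_neg_left]
    linarith
  have hpos : ∀ t : ℝ, 0 < t → 0 ≤ F (v + t • v₀) := fun t ht ↦ h _ <| by
    rw [quadraticForm_apply_add_smul, hv]
    have := mul_nonpos_of_nonneg_of_nonpos ht.le hpolar
    have := mul_neg_of_pos_of_neg (pow_pos ht 2) hv₀
    linarith
  have hcont : Continuous fun t : ℝ ↦ F (v + t • v₀) := by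
    simp only [quadraticForm_apply_add_smul]
    fun_prop
  have hlim := (hcont.tendsto 0).mono_left (nhdsWithin_le_nhds (s := Set.Ioi 0))
  rw [zero_smul, add_zero] at hlim
  exact ge_of_tendsto hlim (eventually_mem_nhdsWithin.mono hpos)

theorem exists_pos_root_neg_root {a b c : ℝ} (ha : a < 0) (hc : 0 < c) :
    ∃ r s : ℝ, 0 < r ∧ s < 0 ∧ c + r * b + r ^ 2 * a = 0 ∧ c + s * b + s ^ 2 * a = 0 ∧
      r * s * a = c := by
  have hdiscrim : 0 ≤ discrim a b c := by
    rw [discrim]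
    nlinarith [sq_nonneg b, mul_pos (neg_pos.2 ha) hc]
  obtain ⟨r, hr⟩ := exists_quadratic_eq_zero ha.ne ⟨_, (Real.mul_self_sqrt hdiscrim).symm⟩
  have ha0 : a ≠ 0 := ha.ne
  obtain ⟨s, hs, -, hrs⟩ := vieta_formula_quadratic (x := r) (b := -b / a) (c := c / a) (by
    field_simp
    linear_combination hr)
  have hs_root : c + s * b + s ^ 2 * a = 0 := by
    field_simp at hs
    linear_combination hs
  have hr_root : c + r * b + r ^ 2 * a = 0 := by linear_combination hr
  have hprod : r * s * a = c := by rw [hrs, div_mul_cancel₀ _ ha0]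
  rcases mul_neg_iff.1 (hrs.trans_lt (div_neg_of_pos_of_neg hc ha)) with ⟨hr0, hs0⟩ | ⟨hr0, hs0⟩
  · exact ⟨r, s, hr0, hs0, hr_root, hs_root, hprod⟩
  · exact ⟨s, r, hs0, hr0, hs_root, hr_root, by rwa [mul_comm s r]⟩

-- The line `u + t • w` meets the cone `Q = 0` at two points with `t` of opposite signs; a
-- positive combination of the values of `F` there eliminates `QuadraticMap.polar F u w`.
theorem quadraticForm_mul_le_mul_of_pos_of_neg {u w : V} (h : ∀ v, Q v = 0 → 0 ≤ F v)
    (hu : 0 < Q u) (hw : Q w < 0) : F u * Q w ≤ F w * Q u := by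
  obtain ⟨r, s, hr, hs, hr_root, hs_root, hrs⟩ :=
    exists_pos_root_neg_root (b := QuadraticMap.polar Q u w) hw hu
  have hFr : 0 ≤ F (u + r • w) := h _ (by rw [quadraticForm_apply_add_smul, hr_root])
  have hFs : 0 ≤ F (u + s • w) := h _ (by rw [quadraticForm_apply_add_smul, hs_root])
  rw [quadraticForm_apply_add_smul] at hFr hFs
  have helim : 0 ≤ (r - s) * (F u - r * s * F w) := by
    have := mul_nonneg (neg_pos.2 hs).le hFr
    have := mul_nonneg hr.le hFs
    linarith
  have hFu : r * s * F w ≤ F u :=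
    sub_nonneg.1 (nonneg_of_mul_nonneg_right helim (sub_pos.2 (hs.trans hr)))
  calc F u * Q w ≤ r * s * F w * Q w := mul_le_mul_of_nonpos_right hFu hw.le
    _ = F w * Q u := by rw [← hrs]; ring

theorem s_lemma (hQ : ∃ v, Q v < 0) :
    (∀ v, Q v < 0 → 0 ≤ F v) ↔ ∃ ξ : ℝ, 0 ≤ ξ ∧ ∀ v, 0 ≤ F v + ξ * Q v := by
  refine ⟨fun h ↦ ?_, fun ⟨ξ, hξ, h⟩ v hv ↦ ?_⟩
  · obtain ⟨v₀, hv₀⟩ := hQ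
    have hzero : ∀ v, Q v = 0 → 0 ≤ F v := fun v ↦ quadraticForm_nonneg_of_eq_zero hv₀ h
    obtain ⟨ξ, hlower, hupper⟩ := exists_between_of_forall_le
      (s := insert 0 ((fun u ↦ -F u / Q u) '' {u | 0 < Q u}))
      (t := (fun w ↦ F w / -Q w) '' {w | Q w < 0}) (Set.insert_nonempty _ _)
      (Set.Nonempty.image _ ⟨v₀, hv₀⟩) (by
        rintro _ (rfl | ⟨u, hu, rfl⟩) _ ⟨w, hw, rfl⟩
        · exact div_nonneg (h w hw) (neg_pos.2 hw).le
        · rw [div_le_div_iff₀ hu (neg_pos.2 hw), neg_mul_neg]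
          exact quadraticForm_mul_le_mul_of_pos_of_neg hzero hu hw)
    refine ⟨ξ, hlower (Set.mem_insert _ _), fun v ↦ ?_⟩
    rcases lt_trichotomy (Q v) 0 with hv | hv | hv
    · have := (le_div_iff₀ (neg_pos.2 hv)).1 (hupper ⟨v, hv, rfl⟩)
      linarith
    · simpa only [hv, mul_zero, add_zero] using hzero v hv
    · have := (div_le_iff₀ hv).1 (hlower (Set.mem_insert_of_mem _ ⟨v, hv, rfl⟩))
      linarith
  · have := mul_nonpos_of_nonneg_of_nonpos hξ hv.le
    linarith [h v]

end SLemma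

section GapForm

variable {E W : Type*} [NormedAddCommGroup E] [InnerProductSpace ℝ E] [AddCommGroup W] [Module ℝ W]

open scoped RealInnerProductSpace

theorem forall_nonneg_norm_sq_add_inner_iff [Nontrivial E] {α β : ℝ} {a : E} :
    (∀ c : E, 0 ≤ α * ‖c‖ ^ 2 + 2 * ⟪c, a⟫ + β) ↔ 0 ≤ α ∧ 0 ≤ β ∧ ‖a‖ ^ 2 ≤ α * β := by
  refine ⟨fun h ↦ ?_, fun ⟨hα, hβ, hle⟩ c ↦ ?_⟩
  · have hβ : 0 ≤ β := by simpa using h 0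
    have hα : 0 ≤ α := by
      by_contra! hneg
      obtain ⟨c, hc⟩ := exists_norm_eq E (Real.sqrt_nonneg ((β + 1) / -α))
      have hsq : α * ‖c‖ ^ 2 = -(β + 1) := by
        rw [hc, Real.sq_sqrt (div_nonneg (by linarith) (by linarith))]
        have := hneg.ne
        field_simp
      have hplus := h c
      have hminus := h (-c)
      rw [norm_neg, inner_neg_left] at hminus
      linarith
    refine ⟨hα, hβ, ?_⟩
    rcases (sq_nonneg ‖a‖).eq_or_lt with ha | ha
    · rw [← ha]
      positivity
    · have hdiscrim : discrim (α * ‖a‖ ^ 2) (2 * ‖a‖ ^ 2) β ≤ 0 := discrim_le_zero fun t ↦ by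
        have := h (t • a)
        rw [norm_smul, mul_pow, Real.norm_eq_abs, sq_abs, real_inner_smul_left,
          real_inner_self_eq_norm_sq] at this
        linarith
      rw [discrim] at hdiscrim
      refine le_of_mul_le_mul_right ?_ ha
      linarith
  · rcases hα.eq_or_lt with rfl | hα
    · have ha : a = 0 := by simpa using hle
      simpa [ha] using hβ
    · have hsq : 0 ≤ α * (α * ‖c‖ ^ 2 + 2 * ⟪c, a⟫ + β) := calc
        0 ≤ ‖α • c + a‖ ^ 2 + (α * β - ‖a‖ ^ 2) := add_nonneg (sq_nonneg _) (sub_nonneg.2 hle)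
        _ = α * (α * ‖c‖ ^ 2 + 2 * ⟪c, a⟫ + β) := by
          rw [norm_add_sq_real, norm_smul, mul_pow, Real.norm_eq_abs, sq_abs,
            real_inner_smul_left]
          ring
      exact nonneg_of_mul_nonneg_right hsq hα

/-- The quadratic form `(c, w) ↦ α‖c‖² + 2⟪c, L w⟫ + ‖D w‖²` on `E × W`. The auxiliary variable `c`
linearises the constraint `‖L w‖² ≤ α‖D w‖²` without dividing by `α`. -/
noncomputable def gapForm (α : ℝ) (L D : W →ₗ[ℝ] E) : QuadraticForm ℝ (E × W) :=
  LinearMap.BilinMap.toQuadraticMap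
    (α • (innerₗ E).compl₁₂ (.fst ℝ E W) (.fst ℝ E W) +
      (2 : ℝ) • (innerₗ E).compl₁₂ (.fst ℝ E W) (L ∘ₗ .snd ℝ E W) +
      (innerₗ E).compl₁₂ (D ∘ₗ .snd ℝ E W) (D ∘ₗ .snd ℝ E W))

theorem gapForm_apply (α : ℝ) (L D : W →ₗ[ℝ] E) (c : E) (w : W) :
    gapForm α L D (c, w) = α * ‖c‖ ^ 2 + 2 * ⟪c, L w⟫ + ‖D w‖ ^ 2 := by
  simp [gapForm]

theorem forall_gapForm_nonneg_iff {α : ℝ} {L D : W →ₗ[ℝ] E} {w : W} (hw : D w ≠ 0) :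
    (∀ c, 0 ≤ gapForm α L D (c, w)) ↔ ‖L w‖ ^ 2 ≤ α * ‖D w‖ ^ 2 := by
  have := nontrivial_of_ne _ _ hw
  simp only [gapForm_apply, forall_nonneg_norm_sq_add_inner_iff]
  refine ⟨fun h ↦ h.2.2, fun h ↦ ⟨?_, sq_nonneg _, h⟩⟩
  exact nonneg_of_mul_nonneg_left ((sq_nonneg _).trans h) (pow_pos (norm_pos_iff.2 hw) 2)

end GapForm

section RealPart

variable {m : Type*}

theorem map_re_add_I_smul_map_im (H : Matrix m m ℂ) :
    (H.map Complex.re).map Complex.ofReal + Complex.I • (H.map Complex.im).map Complex.ofReal =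
      H := by
  ext i j
  simp [mul_comm Complex.I, Complex.re_add_im]

theorem isSymm_map_re {H : Matrix m m ℂ} (hH : H.IsHermitian) : (H.map Complex.re).IsSymm := by
  ext i j
  simp [← hH.apply i j]

theorem transpose_map_im {H : Matrix m m ℂ} (hH : H.IsHermitian) :
    (H.map Complex.im)ᵀ = -H.map Complex.im := by
  ext i j
  simp [← hH.apply i j]

theorem posSemidef_map_ofReal [Finite m] {R : Matrix m m ℝ} (hR : R.PosSemidef) :
    (R.map Complex.ofReal).PosSemidef := by
  have := Fintype.ofFinite m
  classical
  obtain ⟨N, rfl⟩ : ∃ N : Matrix m m ℝ, R = Nᴴ * N := by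
    open scoped MatrixOrder in exact CStarAlgebra.nonneg_iff_eq_star_mul_self.1 hR.nonneg
  have hmap : (Nᴴ * N).map Complex.ofReal = (N.map Complex.ofReal)ᴴ * N.map Complex.ofReal := by
    ext i j
    simp [Matrix.mul_apply]
  rw [hmap]
  exact posSemidef_conjTranspose_mul_self _

variable [Fintype m]

theorem re_star_ofReal_dotProduct_mulVec (H : Matrix m m ℂ) (v : m → ℝ) :
    (star (Complex.ofReal ∘ v) ⬝ᵥ H *ᵥ (Complex.ofReal ∘ v)).re = v ⬝ᵥ H.map Complex.re *ᵥ v := by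
  simp [dotProduct, mulVec]

theorem dotProduct_ofReal (l : m → ℂ) (v : m → ℝ) :
    l ⬝ᵥ (Complex.ofReal ∘ v) = Fintype.linearCombination ℝ l v := by
  simp [dotProduct, Fintype.linearCombination_apply, mul_comm]

theorem dotProduct_map_re_vecMulVec_star_mulVec (l : m → ℂ) (v : m → ℝ) :
    v ⬝ᵥ (vecMulVec (star l) l).map Complex.re *ᵥ v = ‖Fintype.linearCombination ℝ l v‖ ^ 2 := by
  rw [← re_star_ofReal_dotProduct_mulVec, vecMulVec_mulVec, dotProduct_smul, star_dotProduct_star,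
    dotProduct_ofReal]
  simp [Complex.sq_norm, Complex.normSq_apply]

end RealPart

section BorderedMatrix

variable {m : Type*}

/-- The bordered Hermitian matrix `[[α, l], [l*, D]]`. -/
def bordered (α : ℝ) (l : m → ℂ) (D : Matrix m m ℂ) : Matrix (Unit ⊕ m) (Unit ⊕ m) ℂ :=
  fromBlocks (of fun _ _ ↦ (α : ℂ)) (replicateRow Unit l) (replicateCol Unit (star l)) D

theorem posSemidef_fromBlocks_zero {R k : Type*} [CommRing R] [PartialOrder R] [StarRing R]
    [Finite k] [Finite m] {S : Matrix m m R} (hS : S.PosSemidef) :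
    (fromBlocks (0 : Matrix k k R) 0 0 S).PosSemidef := by
  have := Fintype.ofFinite m
  classical
  let K : Matrix m (k ⊕ m) R := fromCols 0 1
  have hK : fromBlocks (0 : Matrix k k R) 0 0 S = Kᴴ * S * K := by
    simp [K, conjTranspose_fromCols_eq_fromRows_conjTranspose, fromRows_mul, mul_fromCols,
      ← fromCols_fromRows_eq_fromBlocks]
  rw [hK]
  exact hS.conjTranspose_mul_mul_same K

-- A vanishing `α` is covered because then `l = 0` and `α⁻¹ = 0`.
theorem posSemidef_bordered_of_schur [Finite m] {α : ℝ} {l : m → ℂ} {D : Matrix m m ℂ}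
    (hα : 0 ≤ α) (hl : α = 0 → l = 0)
    (hS : (D - ((α⁻¹ : ℝ) : ℂ) • vecMulVec (star l) l).PosSemidef) :
    (bordered α l D).PosSemidef := by
  let u : Unit ⊕ m → ℂ := Sum.elim (fun _ ↦ (α : ℂ)) l
  have hdecomp : bordered α l D = ((α⁻¹ : ℝ) : ℂ) • vecMulVec (star u) u +
      fromBlocks 0 0 0 (D - ((α⁻¹ : ℝ) : ℂ) • vecMulVec (star l) l) := by
    rcases eq_or_ne α 0 with h | h
    · ext (i | i) (j | j) <;> simp [bordered, u, h, hl h]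
    · ext (i | i) (j | j) <;> simp [bordered, u, vecMulVec_apply, h, mul_comm]
  rw [hdecomp]
  exact ((posSemidef_vecMulVec_star_self u).smul (by exact_mod_cast inv_nonneg.2 hα)).add
    (posSemidef_fromBlocks_zero hS)

variable [Fintype m]

theorem re_star_dotProduct_bordered_mulVec (α : ℝ) (l : m → ℂ) (D : Matrix m m ℂ) (c : ℂ)
    (v : m → ℝ) :
    (star (Sum.elim (fun _ ↦ c) (Complex.ofReal ∘ v)) ⬝ᵥ
        bordered α l D *ᵥ Sum.elim (fun _ ↦ c) (Complex.ofReal ∘ v)).re =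
      α * ‖c‖ ^ 2 + 2 * inner ℝ c (Fintype.linearCombination ℝ l v) +
        v ⬝ᵥ D.map Complex.re *ᵥ v := by
  have hcol : replicateCol Unit (star l) *ᵥ (fun _ ↦ c) = c • star l := by
    ext i
    simp [mulVec, dotProduct, mul_comm]
  have hrow : replicateRow Unit l *ᵥ (Complex.ofReal ∘ v) =
      fun _ ↦ Fintype.linearCombination ℝ l v := by
    rw [← dotProduct_ofReal]
    rfl
  have hcorner : (of fun _ _ ↦ (α : ℂ) : Matrix Unit Unit ℂ) *ᵥ (fun _ ↦ c) = fun _ ↦ α * c := by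
    ext i
    simp [mulVec, dotProduct]
  have hstar : star (Sum.elim (fun _ ↦ c) (Complex.ofReal ∘ v) : Unit ⊕ m → ℂ) =
      Sum.elim (fun _ ↦ star c) (star (Complex.ofReal ∘ v)) := Function.star_sumElim _ _
  rw [bordered, fromBlocks_mulVec, hstar, Sum.elim_comp_inl, Sum.elim_comp_inr,
    sumElim_dotProduct_sumElim, hcol, hrow, hcorner, dotProduct_add (star _), dotProduct_smul,
    star_dotProduct_star, dotProduct_ofReal, Complex.add_re, Complex.add_re,
    re_star_ofReal_dotProduct_mulVec]
  simp only [RCLike.star_def, dotProduct_pUnit, Complex.mul_re, Complex.mul_im, Complex.conj_re,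
    Complex.conj_im, Complex.ofReal_re, Complex.ofReal_im, smul_eq_mul, Complex.sq_norm,
    Complex.normSq_apply, Complex.inner, dotProduct_add, Complex.add_re]
  ring

theorem exists_skew_posSemidef_bordered_iff {α : ℝ} {l : m → ℂ} {D : Matrix m m ℂ}
    (hD : D.IsHermitian) :
    (∃ X : Matrix m m ℝ, Xᵀ = -X ∧
        (bordered α l (D - Complex.I • X.map Complex.ofReal)).PosSemidef) ↔
      ∀ (c : ℂ) (v : m → ℝ), 0 ≤ α * ‖c‖ ^ 2 + 2 * inner ℝ c (Fintype.linearCombination ℝ l v) +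
        v ⬝ᵥ D.map Complex.re *ᵥ v := by
  classical
  refine ⟨fun ⟨X, _, hX⟩ c v ↦ ?_, fun h ↦ ?_⟩
  · have hre : (D - Complex.I • X.map Complex.ofReal).map Complex.re = D.map Complex.re := by
      ext i j
      simp
    rw [← hre, ← re_star_dotProduct_bordered_mulVec]
    exact (Complex.nonneg_iff.1 (hX.dotProduct_mulVec_nonneg _)).1
  · have hbound v := forall_nonneg_norm_sq_add_inner_iff.1 fun c ↦ h c v
    have hα : 0 ≤ α := (hbound 0).1
    have hl : α = 0 → l = 0 := fun hα0 ↦ funext fun j ↦ by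
      simpa [hα0] using (hbound (Pi.single j 1)).2.2
    let S : Matrix m m ℂ := D - ((α⁻¹ : ℝ) : ℂ) • vecMulVec (star l) l
    have hS : S.IsHermitian := by
      refine hD.sub ((posSemidef_vecMulVec_star_self l).isHermitian.smul ?_)
      exact Complex.conj_ofReal _
    refine ⟨S.map Complex.im, transpose_map_im hS, posSemidef_bordered_of_schur hα hl ?_⟩
    have hreal : D - Complex.I • (S.map Complex.im).map Complex.ofReal -
        ((α⁻¹ : ℝ) : ℂ) • vecMulVec (star l) l = (S.map Complex.re).map Complex.ofReal := by
      rw [sub_right_comm, sub_eq_iff_eq_add]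
      exact (map_re_add_I_smul_map_im S).symm
    rw [hreal]
    refine posSemidef_map_ofReal (.of_dotProduct_mulVec_nonneg (isSymm_map_re hS) fun v ↦ ?_)
    have hSre : S.map Complex.re =
        D.map Complex.re - α⁻¹ • (vecMulVec (star l) l).map Complex.re := by
      ext i j
      simp [S, -Complex.ofReal_inv]
    rw [star_trivial, hSre, sub_mulVec, smul_mulVec, dotProduct_sub, dotProduct_smul,
      dotProduct_map_re_vecMulVec_star_mulVec, sub_nonneg]
    exact inv_mul_le_of_le_mul₀ hα (hbound v).2.1 (hbound v).2.2

end BorderedMatrix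

section Ellipsoid

theorem vecMul_inv_eq_inv_mulVec {m R : Type*} [Fintype m] [DecidableEq m] [CommRing R]
    {P : Matrix m m R} (hP : P.IsSymm) (v : m → R) : v ᵥ* P⁻¹ = P⁻¹ *ᵥ v := by
  rw [← mulVec_transpose, transpose_nonsing_inv, hP]

variable {n : ℕ} {P : Matrix (Fin n) (Fin n) ℝ}

/-- The point `(θ, 1)` of the affine chart `s = 1` of `ℝⁿ × ℝ`. -/
def homogenize (θ : Fin n → ℝ) : Fin n ⊕ Unit → ℝ := Sum.elim θ fun _ ↦ 1

theorem isSymm_Bmat (hP : P.IsSymm) (θhat : Fin n → ℝ) (χ : ℝ) : (Bmat P θhat χ).IsSymm := by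
  refine IsSymm.fromBlocks (by rw [IsSymm, transpose_nonsing_inv, hP]) ?_ rfl
  rw [vecMul_inv_eq_inv_mulVec hP]
  rfl

theorem dotProduct_Bmat_mulVec (hP : P.IsSymm) (θhat : Fin n → ℝ) (χ : ℝ)
    (v : Fin n ⊕ Unit → ℝ) :
    v ⬝ᵥ Bmat P θhat χ *ᵥ v =
      (v ∘ Sum.inl - v (.inr ()) • θhat) ⬝ᵥ P⁻¹ *ᵥ (v ∘ Sum.inl - v (.inr ()) • θhat) -
        v (.inr ()) ^ 2 * χ := by
  obtain ⟨p, s, rfl⟩ : ∃ p s, v = Sum.elim p fun _ ↦ s :=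
    ⟨v ∘ Sum.inl, v (.inr ()), by ext (i | _) <;> rfl⟩
  have hcol : (of fun i _ ↦ -(P⁻¹ *ᵥ θhat) i : Matrix (Fin n) Unit ℝ) *ᵥ (fun _ ↦ s) =
      -(s • P⁻¹ *ᵥ θhat) := by
    ext i
    simp [mulVec, mul_comm s]
  have hrow : (of fun _ j ↦ -(P⁻¹ *ᵥ θhat) j : Matrix Unit (Fin n) ℝ) *ᵥ p =
      fun _ ↦ -(p ⬝ᵥ P⁻¹ *ᵥ θhat) := by
    rw [dotProduct_comm, ← neg_dotProduct]
    rfl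
  have hcorner : (of fun _ _ ↦ θhat ⬝ᵥ P⁻¹ *ᵥ θhat - χ : Matrix Unit Unit ℝ) *ᵥ (fun _ ↦ s) =
      fun _ ↦ (θhat ⬝ᵥ P⁻¹ *ᵥ θhat - χ) * s := by
    ext
    simp [mulVec]
  have hcross : θhat ⬝ᵥ P⁻¹ *ᵥ p = p ⬝ᵥ P⁻¹ *ᵥ θhat := by
    rw [dotProduct_mulVec, vecMul_inv_eq_inv_mulVec hP, dotProduct_comm]
  rw [Bmat, vecMul_inv_eq_inv_mulVec hP, fromBlocks_mulVec]
  simp only [Sum.elim_comp_inl, Sum.elim_comp_inr, Sum.elim_inr, sumElim_dotProduct_sumElim, hcol,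
    hrow, hcorner, mulVec_sub, mulVec_smul, sub_dotProduct, dotProduct_sub, dotProduct_add,
    dotProduct_neg, smul_dotProduct, dotProduct_smul, smul_eq_mul, hcross]
  simp only [dotProduct, Finset.univ_unique, Finset.sum_singleton]
  ring

/-- The quadratic form of `Bmat`, read as a form on `ℂ × ℝⁿ⁺¹` that ignores the first factor. -/
noncomputable def ellipsoidForm (P : Matrix (Fin n) (Fin n) ℝ) (θhat : Fin n → ℝ) (χ : ℝ) :
    QuadraticForm ℝ (ℂ × (Fin n ⊕ Unit → ℝ)) :=
  (Bmat P θhat χ).toQuadraticForm'.comp (.snd ℝ _ _)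

theorem ellipsoidForm_apply (θhat : Fin n → ℝ) (χ : ℝ) (c : ℂ) (v : Fin n ⊕ Unit → ℝ) :
    ellipsoidForm P θhat χ (c, v) = v ⬝ᵥ Bmat P θhat χ *ᵥ v := by
  simp [ellipsoidForm, toQuadraticForm', toLinearMap₂'_apply']

theorem ellipsoidForm_homogenize_neg_iff (hP : P.IsSymm) {θhat θ : Fin n → ℝ} {χ : ℝ} {c : ℂ} :
    ellipsoidForm P θhat χ (c, homogenize θ) < 0 ↔ θ ∈ ellipsoid P θhat χ := by
  simp [ellipsoidForm_apply, dotProduct_Bmat_mulVec hP, homogenize, ellipsoid, Function.comp_def]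

theorem exists_ellipsoidForm_neg (hP : P.IsSymm) {θhat : Fin n → ℝ} {χ : ℝ} (hχ : 0 < χ) :
    ∃ p, ellipsoidForm P θhat χ p < 0 :=
  ⟨(0, homogenize θhat), (ellipsoidForm_homogenize_neg_iff hP).2 (by simpa [ellipsoid] using hχ)⟩

-- A vector with vanishing last coordinate has a nonnegative value because `P⁻¹ ≥ 0`, so every
-- point of the negative cone is a multiple of some `(c, homogenize θ)`.
theorem forall_ellipsoidForm_neg_imp_nonneg_iff (hP : P.PosSemidef) {θhat : Fin n → ℝ} {χ : ℝ}
    {F : QuadraticForm ℝ (ℂ × (Fin n ⊕ Unit → ℝ))} :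
    (∀ p, ellipsoidForm P θhat χ p < 0 → 0 ≤ F p) ↔
      ∀ θ ∈ ellipsoid P θhat χ, ∀ c, 0 ≤ F (c, homogenize θ) := by
  have hsymm : P.IsSymm := hP.isHermitian
  refine ⟨fun h θ hθ c ↦ h _ ((ellipsoidForm_homogenize_neg_iff hsymm).2 hθ), fun h ⟨c, v⟩ hv ↦ ?_⟩
  obtain ⟨s, hs⟩ : ∃ s, v (.inr ()) = s := ⟨_, rfl⟩
  have hs0 : s ≠ 0 := by
    rintro rfl
    rw [ellipsoidForm_apply, dotProduct_Bmat_mulVec hsymm, hs] at hv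
    have := hP.inv.dotProduct_mulVec_nonneg (v ∘ Sum.inl)
    simp only [zero_smul, sub_zero, zero_pow two_ne_zero, zero_mul] at hv
    exact hv.not_ge this
  have hscale : (c, v) = s • (s⁻¹ • c, homogenize (s⁻¹ • v ∘ Sum.inl)) := by
    refine Prod.ext (smul_inv_smul₀ hs0 c).symm (funext ?_)
    rintro (i | _)
    · simp [homogenize, hs0]
    · simp [homogenize, hs]
  rw [hscale, QuadraticMap.map_smul, smul_eq_mul] at hv ⊢
  have hθ := (ellipsoidForm_homogenize_neg_iff hsymm).1
    ((pos_iff_neg_of_mul_neg hv).1 (mul_self_pos.2 hs0))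
  exact mul_nonneg (mul_self_nonneg s) (h _ hθ _)

end Ellipsoid

section TransferFunction

/-- The squared radius of the disc of `{x, y, z}`-dissipative numbers, whose centre is `-y/x`;
denoted `α` in the paper. -/
noncomputable def radiusSq (x : ℝ) (y : ℂ) (z : ℝ) : ℝ := Complex.normSq y / x ^ 2 - z / x

theorem dissipative_iff_norm_sq_le {x : ℝ} (hx : 0 < x) (y : ℂ) (z : ℝ) (Δ : ℂ) :
    Dissipative x y z Δ ↔ ‖Δ + y / x‖ ^ 2 ≤ radiusSq x y z := by
  have hsq : x * (‖Δ + y / x‖ ^ 2 - radiusSq x y z) =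
      x * Complex.normSq Δ + 2 * (starRingEnd ℂ y * Δ).re + z := by
    have hcross : (Δ * starRingEnd ℂ (y / x)).re = (starRingEnd ℂ y * Δ).re / x := by
      rw [map_div₀, Complex.conj_ofReal, ← mul_div_assoc, Complex.div_ofReal_re, mul_comm]
    rw [Complex.sq_norm, Complex.normSq_add, Complex.normSq_div, Complex.normSq_ofReal, hcross,
      radiusSq]
    field_simp
    ring
  rw [Dissipative, ← hsq, mul_sub, sub_nonpos, mul_le_mul_iff_right₀ hx]

variable {n : ℕ} (e : ℂ) (ZN ZD : Fin n → ℂ)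

/-- The row vector `[Z_D, 1]`, so that `A₁ = [Z_D, 1]* [Z_D, 1]`. -/
def denVec : Fin n ⊕ Unit → ℂ := Sum.elim ZD fun _ ↦ 1

theorem A1mat_eq_vecMulVec : A1mat ZD = vecMulVec (star (denVec ZD)) (denVec ZD) := by
  ext (i | i) (j | j) <;> simp [A1mat, denVec, vecMulVec_apply]

theorem linearCombination_denVec_homogenize (θ : Fin n → ℝ) :
    Fintype.linearCombination ℝ (denVec ZD) (homogenize θ) = 1 + ∑ i, ZD i * (θ i : ℂ) := by
  simp [Fintype.linearCombination_apply, denVec, homogenize, mul_comm, add_comm]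

theorem linearCombination_lamVec_homogenize (x : ℝ) (y : ℂ) (θ : Fin n → ℝ) :
    Fintype.linearCombination ℝ (lamVec e ZN ZD x y) (homogenize θ) =
      (e + ∑ i, ZN i * (θ i : ℂ)) + y / x * (1 + ∑ i, ZD i * (θ i : ℂ)) := by
  simp only [Fintype.linearCombination_apply, Fintype.sum_sum_type, lamVec, homogenize,
    Sum.elim_inl, Sum.elim_inr, Complex.real_smul, mul_add, Finset.sum_add_distrib, Finset.mul_sum,
    Finset.univ_unique, Finset.sum_const, Finset.card_singleton, one_smul, Complex.ofReal_one,
    mul_one, mul_comm, mul_left_comm]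
  ring

/-- The gap form of `T`: its values over `homogenize θ` are nonnegative exactly when `T(θ)` is
dissipative. -/
noncomputable def dissipationForm (x : ℝ) (y : ℂ) (z : ℝ) :
    QuadraticForm ℝ (ℂ × (Fin n ⊕ Unit → ℝ)) :=
  gapForm (radiusSq x y z) (Fintype.linearCombination ℝ (-lamVec e ZN ZD x y))
    (Fintype.linearCombination ℝ (denVec ZD))

theorem dissipative_Tval_iff {θ : Fin n → ℝ} (hden : (1 : ℂ) + ∑ i, ZD i * (θ i : ℂ) ≠ 0) {x : ℝ}
    (hx : 0 < x) (y : ℂ) (z : ℝ) :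
    Dissipative x y z (Tval e ZN ZD θ) ↔
      ∀ c, 0 ≤ dissipationForm e ZN ZD x y z (c, homogenize θ) := by
  have hneg : Fintype.linearCombination ℝ (-lamVec e ZN ZD x y) (homogenize θ) =
      -Fintype.linearCombination ℝ (lamVec e ZN ZD x y) (homogenize θ) := by
    simp [Fintype.linearCombination_apply]
  rw [dissipationForm, forall_gapForm_nonneg_iff (by rwa [linearCombination_denVec_homogenize]),
    hneg, norm_neg, linearCombination_lamVec_homogenize, linearCombination_denVec_homogenize,
    dissipative_iff_norm_sq_le hx, Tval,
    ← mul_le_mul_iff_left₀ (pow_pos (norm_pos_iff.2 hden) 2), ← mul_pow, ← norm_mul, add_mul,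
    div_mul_cancel₀ _ hden]

theorem neg_bigMat (P : Matrix (Fin n) (Fin n) ℝ) (θhat : Fin n → ℝ) (χ x : ℝ) (y : ℂ) (z ξ : ℝ)
    (X : Matrix (Fin n ⊕ Unit) (Fin n ⊕ Unit) ℝ) :
    -bigMat e ZN ZD P θhat χ x y z ξ X =
      bordered (radiusSq x y z) (-lamVec e ZN ZD x y)
        (A1mat ZD + (ξ : ℂ) • (Bmat P θhat χ).map Complex.ofReal -
          Complex.I • X.map Complex.ofReal) := by
  rw [bigMat, bordered, fromBlocks_neg]
  congr 1
  · ext i j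
    simp [radiusSq]
  · abel

theorem exists_skew_posSemidef_neg_bigMat_iff {P : Matrix (Fin n) (Fin n) ℝ} (hP : P.IsSymm)
    {θhat : Fin n → ℝ} {χ x : ℝ} {y : ℂ} {z ξ : ℝ} :
    (∃ X : Matrix (Fin n ⊕ Unit) (Fin n ⊕ Unit) ℝ, Xᵀ = -X ∧
        (-bigMat e ZN ZD P θhat χ x y z ξ X).PosSemidef) ↔
      ∀ p, 0 ≤ dissipationForm e ZN ZD x y z p + ξ * ellipsoidForm P θhat χ p := by
  have hherm : (A1mat ZD + (ξ : ℂ) • (Bmat P θhat χ).map Complex.ofReal).IsHermitian := by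
    rw [A1mat_eq_vecMulVec]
    refine (posSemidef_vecMulVec_star_self _).isHermitian.add (IsHermitian.smul ?_ ?_)
    · ext i j
      simp [(isSymm_Bmat hP θhat χ).apply i j]
    · exact Complex.conj_ofReal ξ
  have hre : (A1mat ZD + (ξ : ℂ) • (Bmat P θhat χ).map Complex.ofReal).map Complex.re =
      (A1mat ZD).map Complex.re + ξ • Bmat P θhat χ := by
    ext i j
    simp
  simp only [neg_bigMat, exists_skew_posSemidef_bordered_iff hherm, hre, add_mulVec,
    dotProduct_add, smul_mulVec, dotProduct_smul, smul_eq_mul]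
  simp only [A1mat_eq_vecMulVec, dotProduct_map_re_vecMulVec_star_mulVec, Prod.forall,
    dissipationForm, gapForm_apply, ellipsoidForm_apply, add_assoc]

end TransferFunction

/-- For `x > 0`, `T(θ)` is `{x,y,z}`-dissipative for every `θ` in the ellipsoid `U` iff
there exist `ξ ≥ 0` and a real skew-symmetric matrix `𝒳` such that the Hermitian matrix
`[[−α, λ],[λ*, −A₁ − ξB + i𝒳]]` is negative semidefinite, with
`λ = [Z_N + (y/x)Z_D , e + y/x]` and `α = |y|²/x² − z/x`. -/
theorem dissipativity_iff_LMI {n : ℕ} (e : ℂ) (ZN ZD : Fin n → ℂ)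
    (P : Matrix (Fin n) (Fin n) ℝ) (hP : P.PosDef)
    (θhat : Fin n → ℝ) (χ : ℝ) (hχ : 0 < χ)
    (hden : ∀ θ ∈ ellipsoid P θhat χ, (1 : ℂ) + ∑ i, ZD i * (θ i : ℂ) ≠ 0)
    (x : ℝ) (hx : 0 < x) (y : ℂ) (z : ℝ) :
    (∀ θ ∈ ellipsoid P θhat χ, Dissipative x y z (Tval e ZN ZD θ)) ↔
      ∃ ξ : ℝ, 0 ≤ ξ ∧
        ∃ X : Matrix (Fin n ⊕ Unit) (Fin n ⊕ Unit) ℝ, Xᵀ = -X ∧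
          (-(bigMat e ZN ZD P θhat χ x y z ξ X)).PosSemidef := by
  have hsymm : P.IsSymm := hP.isHermitian
  calc (∀ θ ∈ ellipsoid P θhat χ, Dissipative x y z (Tval e ZN ZD θ))
    _ ↔ ∀ θ ∈ ellipsoid P θhat χ, ∀ c, 0 ≤ dissipationForm e ZN ZD x y z (c, homogenize θ) :=
      forall₂_congr fun θ hθ ↦ dissipative_Tval_iff e ZN ZD (hden θ hθ) hx y z
    _ ↔ ∀ p, ellipsoidForm P θhat χ p < 0 → 0 ≤ dissipationForm e ZN ZD x y z p :=
      (forall_ellipsoidForm_neg_imp_nonneg_iff hP.posSemidef).symm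
    _ ↔ ∃ ξ : ℝ, 0 ≤ ξ ∧
          ∀ p, 0 ≤ dissipationForm e ZN ZD x y z p + ξ * ellipsoidForm P θhat χ p :=
      s_lemma (exists_ellipsoidForm_neg hsymm hχ)
    _ ↔ _ := by simp only [exists_skew_posSemidef_neg_bigMat_iff e ZN ZD hsymm]
end

section
/- (Global step, graph-separation sufficiency) Suppose there exist positive definite diagonal real matrices T¹, …, T^{N_d} ∈ ℝ^{N×N} such that the Hermitian matrix [M; I]* 𝒩 [M; I] ∈ ℂ^{(N+n_w)×(N+n_w)} is positive definite, where I is the (N+n_w)×(N+n_w) identity and 𝒩 is the Hermitian matrix acting on stacked vectors (r, z, y, w) ∈ ℂ^N × ℂ^{n_z} × ℂ^N × ℂ^{n_w} (with (r, z) = M(y, w)) whose quadratic form is r*(Σ_k T^k 𝒵^k)r − z*z + 2Re(y*(Σ_k T^k 𝒴^k)r) + y*(Σ_k T^k 𝒳^k)y + γ² w*w. Then for every diagonal matrix Δ = diag(Δ₁, …, Δ_N) ∈ ℂ^{N×N} such that each Δ_i satisfies x^k_i|Δ_i|² + 2Re(conj(y^k_i)·Δ_i) + z^k_i ≤ 0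 for all k = 1, …, N_d, and such that I_N − M₁₁Δ is invertible, the largest singular value of M₂₂ + M₂₁Δ(I_N − M₁₁Δ)⁻¹M₁₂ is strictly less than γ. -/
/-!
Write `r = (1 - M₁₁Δ)⁻¹M₁₂w` for the internal signal produced by an input `w`. Then `M` sends
`(Δr, w)` to `(r, Fw)`, where `F` is the closed loop, so evaluating the form of `𝒩` along
this trajectory splits it into the form of the multiplier block on the graph of `Δ` at `r`, plus
`γ²|w|² - |Fw|²`. The first is nonpositive since each `Δᵢ` is dissipative and the multipliers are
positive, while the sum is positive for `w ≠ 0` because `(Δr, w) ≠ 0`. Hence the second is positive.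
-/

open Matrix
open scoped ComplexOrder

/-- The Hermitian matrix `𝒩` acting on stacked vectors `(r, z, y, w)`, whose quadratic
form is `r*(Σ_k Tᵏ𝒵ᵏ)r − z*z + 2Re(y*(Σ_k Tᵏ𝒴ᵏ)r) + y*(Σ_k Tᵏ𝒳ᵏ)y + γ²w*w`. -/
noncomputable def Nmat {N Nd nw nz : ℕ} (γ : ℝ)
    (x : Fin Nd → Fin N → ℝ) (y : Fin Nd → Fin N → ℂ) (z : Fin Nd → Fin N → ℝ)
    (t : Fin Nd → Fin N → ℝ) :
    Matrix ((Fin N ⊕ Fin nz) ⊕ (Fin N ⊕ Fin nw)) ((Fin N ⊕ Fin nz) ⊕ (Fin N ⊕ Fin nw)) ℂ :=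
  Matrix.fromBlocks
    (Matrix.fromBlocks
      (∑ k : Fin Nd, Matrix.diagonal (fun i => (t k i : ℂ)) *
        Matrix.diagonal (fun i => (z k i : ℂ))) 0 0 (-1))
    (Matrix.fromBlocks
      (∑ k : Fin Nd, Matrix.diagonal (fun i => (t k i : ℂ)) *
        Matrix.diagonal (fun i => y k i)) 0 0 0)ᴴ
    (Matrix.fromBlocks
      (∑ k : Fin Nd, Matrix.diagonal (fun i => (t k i : ℂ)) *
        Matrix.diagonal (fun i => y k i)) 0 0 0)
    (Matrix.fromBlocks
      (∑ k : Fin Nd, Matrix.diagonal (fun i => (t k i : ℂ)) *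
        Matrix.diagonal (fun i => (x k i : ℂ))) 0 0 (((γ ^ 2 : ℝ) : ℂ) • 1))

/-- The stacked matrix `[M; I]` mapping `(y, w)` to `(r, z, y, w)`, where
`M = [[M₁₁, M₁₂],[M₂₁, M₂₂]]`. -/
def stackMat {N nw nz : ℕ}
    (M11 : Matrix (Fin N) (Fin N) ℂ) (M12 : Matrix (Fin N) (Fin nw) ℂ)
    (M21 : Matrix (Fin nz) (Fin N) ℂ) (M22 : Matrix (Fin nz) (Fin nw) ℂ) :
    Matrix ((Fin N ⊕ Fin nz) ⊕ (Fin N ⊕ Fin nw)) (Fin N ⊕ Fin nw) ℂ :=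
  Matrix.fromRows (Matrix.fromBlocks M11 M12 M21 M22) 1

/-- The matrix of the form `v ↦ [v; A v]* [[Z, Y*], [Y, X]] [v; A v]`, i.e. the restriction of a
block quadratic form to the graph of `A`. -/
def graphForm {R m n : Type*} [NonUnitalSemiring R] [Star R] [Fintype m]
    (Z : Matrix n n R) (Y : Matrix m n R) (X : Matrix m m R) (A : Matrix m n R) : Matrix n n R :=
  Z + Yᴴ * A + Aᴴ * Y + Aᴴ * X * A

theorem graphForm_zero_neg_one {R m n : Type*} [Ring R] [StarRing R] [Fintype m] [DecidableEq m]
    (Z : Matrix n n R) (A : Matrix m n R) : graphForm Z 0 (-1) A = Z - Aᴴ * A := by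
  simp [graphForm, sub_eq_add_neg]

theorem graphForm_sum {R ι m n : Type*} [NonUnitalSemiring R] [StarRing R] [Fintype m]
    (s : Finset ι) (Z : ι → Matrix n n R) (Y : ι → Matrix m n R) (X : ι → Matrix m m R)
    (A : Matrix m n R) :
    graphForm (∑ k ∈ s, Z k) (∑ k ∈ s, Y k) (∑ k ∈ s, X k) A =
      ∑ k ∈ s, graphForm (Z k) (Y k) (X k) A := by
  simp only [graphForm, conjTranspose_sum, Matrix.sum_mul, Matrix.mul_sum, Finset.sum_add_distrib]

theorem graphForm_diagonal {R n : Type*} [NonUnitalSemiring R] [StarRing R] [Fintype n]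
    [DecidableEq n] (z y x a : n → R) :
    graphForm (diagonal z) (diagonal y) (diagonal x) (diagonal a) =
      diagonal (z + star y * a + star a * y + star a * x * a) := by
  simp only [graphForm, diagonal_conjTranspose, diagonal_mul_diagonal, diagonal_add]
  rfl

section Dissipative

variable {x c : ℝ} {y Δ : ℂ} {z : ℝ}

theorem Dissipative.const_mul (h : Dissipative x y z Δ) (hc : 0 ≤ c) :
    Dissipative (c * x) (c * y) (c * z) Δ := by
  have h_scaled := mul_nonpos_of_nonneg_of_nonpos hc h
  simp only [Dissipative, map_mul, Complex.conj_ofReal, mul_assoc, Complex.re_ofReal_mul]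
  linarith

theorem dissipative_iff_complex_nonpos :
    Dissipative x y z Δ ↔ (z + star y * Δ + star Δ * y + star Δ * x * Δ : ℂ) ≤ 0 := by
  have h_real : (z + star y * Δ + star Δ * y + star Δ * x * Δ : ℂ) =
      ((x * Complex.normSq Δ + 2 * (starRingEnd ℂ y * Δ).re + z : ℝ) : ℂ) := by
    apply Complex.ext <;> simp [Complex.normSq_apply] <;> ring
  rw [h_real, Dissipative]
  norm_cast

end Dissipative

theorem posSemidef_neg_graphForm_diagonal {n : Type*} [Fintype n] [DecidableEq n]
    {x : n → ℝ} {y : n → ℂ} {z : n → ℝ} {Δ : n → ℂ}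
    (h : ∀ i, Dissipative (x i) (y i) (z i) (Δ i)) :
    (-graphForm (diagonal fun i => (z i : ℂ)) (diagonal y) (diagonal fun i => (x i : ℂ))
      (diagonal Δ)).PosSemidef := by
  rw [graphForm_diagonal, diagonal_neg, posSemidef_diagonal_iff]
  exact fun i => neg_nonneg.2 (dissipative_iff_complex_nonpos.1 (h i))

theorem posSemidef_neg_graphForm_sum_diagonal {ι n : Type*} [Fintype ι] [Fintype n] [DecidableEq n]
    {x : ι → n → ℝ} {y : ι → n → ℂ} {z : ι → n → ℝ} {t : ι → n → ℝ} {Δ : n → ℂ}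
    (ht : ∀ k i, 0 ≤ t k i) (h : ∀ k i, Dissipative (x k i) (y k i) (z k i) (Δ i)) :
    (-graphForm (∑ k, diagonal (fun i => (t k i : ℂ)) * diagonal (fun i => (z k i : ℂ)))
      (∑ k, diagonal (fun i => (t k i : ℂ)) * diagonal (y k))
      (∑ k, diagonal (fun i => (t k i : ℂ)) * diagonal (fun i => (x k i : ℂ)))
      (diagonal Δ)).PosSemidef := by
  rw [graphForm_sum, ← Finset.sum_neg_distrib]
  refine posSemidef_sum _ fun k _ => ?_
  simpa [diagonal_mul_diagonal] using
    posSemidef_neg_graphForm_diagonal fun i => (h k i).const_mul (ht k i)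

/-- The matrix `v ↦ (A v, v)`, whose range is the graph of `A`. The outputs come first, as in
`stackMat`. -/
def graphMatrix {R m n : Type*} [Zero R] [One R] [DecidableEq n] (A : Matrix m n R) :
    Matrix (m ⊕ n) n R :=
  fromRows A 1

/-- The direct sum of the uncertainty multiplier `[[Z, Y*], [Y, X]]`, acting on `(r, y)`, and the
performance multiplier `[[V, P*], [P, W]]`, acting on `(z, w)`, with the signals stacked in the
order `(r, z, y, w)`. -/
def jointMultiplier {R ρ ζ η ω : Type*} [Zero R] [Star R]
    (Z : Matrix ρ ρ R) (Y : Matrix η ρ R) (X : Matrix η η R)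
    (V : Matrix ζ ζ R) (P : Matrix ω ζ R) (W : Matrix ω ω R) :
    Matrix ((ρ ⊕ ζ) ⊕ (η ⊕ ω)) ((ρ ⊕ ζ) ⊕ (η ⊕ ω)) R :=
  fromBlocks (fromBlocks Z 0 0 V) (fromBlocks Y 0 0 P)ᴴ (fromBlocks Y 0 0 P) (fromBlocks X 0 0 W)

theorem Nmat_eq_jointMultiplier {N Nd nw nz : ℕ} (γ : ℝ) (x : Fin Nd → Fin N → ℝ)
    (y : Fin Nd → Fin N → ℂ) (z : Fin Nd → Fin N → ℝ) (t : Fin Nd → Fin N → ℝ) :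
    Nmat (nw := nw) (nz := nz) γ x y z t = jointMultiplier
      (∑ k, diagonal (fun i => (t k i : ℂ)) * diagonal (fun i => (z k i : ℂ)))
      (∑ k, diagonal (fun i => (t k i : ℂ)) * diagonal (y k))
      (∑ k, diagonal (fun i => (t k i : ℂ)) * diagonal (fun i => (x k i : ℂ)))
      (-1) 0 (((γ ^ 2 : ℝ) : ℂ) • 1) :=
  rfl

/-- The upper linear fractional transformation of `M = [[M11, M12], [M21, M22]]` by `Δ`: the map
`w ↦ z` obtained by closing the loop `y = Δ r`. It is meaningful when `1 - M11 * Δ` is a unit. -/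
noncomputable def upperLFT {R ρ ζ η ω : Type*} [CommRing R] [Fintype ρ] [DecidableEq ρ] [Fintype η]
    (M11 : Matrix ρ η R) (M12 : Matrix ρ ω R) (M21 : Matrix ζ η R) (M22 : Matrix ζ ω R)
    (Δ : Matrix η ρ R) : Matrix ζ ω R :=
  M22 + M21 * Δ * (1 - M11 * Δ)⁻¹ * M12

theorem mulVec_injective_graphMatrix {R m n : Type*} [Semiring R] [Fintype n]
    [DecidableEq n] (A : Matrix m n R) : Function.Injective (graphMatrix A).mulVec := by
  intro v w h
  simpa [graphMatrix, fromRows_mulVec] using congrArg (· ∘ Sum.inr) h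

theorem mul_nonsing_inv_one_sub_add_one {R n : Type*} [CommRing R] [Fintype n] [DecidableEq n]
    {B : Matrix n n R} (hB : IsUnit (1 - B)) : B * (1 - B)⁻¹ + 1 = (1 - B)⁻¹ := by
  have h_inv : (1 - B) * (1 - B)⁻¹ = 1 := mul_nonsing_inv _ ((isUnit_iff_isUnit_det _).1 hB)
  rw [Matrix.sub_mul, Matrix.one_mul] at h_inv
  exact eq_add_of_sub_eq' h_inv |>.symm

section LinearFractional

variable {R ρ ζ η ω : Type*} [Fintype ρ] [Fintype ζ] [Fintype η] [Fintype ω] [DecidableEq ω]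

theorem conjTranspose_mul_jointMultiplier_mul [Semiring R] [StarRing R]
    (Z : Matrix ρ ρ R) (Y : Matrix η ρ R) (X : Matrix η η R)
    (V : Matrix ζ ζ R) (P : Matrix ω ζ R) (W : Matrix ω ω R)
    (Δ : Matrix η ρ R) (A : Matrix ρ ω R) (F : Matrix ζ ω R) :
    (fromRows (fromRows A F) (graphMatrix (Δ * A)))ᴴ * jointMultiplier Z Y X V P W *
        fromRows (fromRows A F) (graphMatrix (Δ * A)) =
      Aᴴ * graphForm Z Y X Δ * A + graphForm W Pᴴ V F := by
  simp only [graphMatrix, jointMultiplier, graphForm, Matrix.mul_assoc, fromBlocks_conjTranspose,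
    conjTranspose_fromRows_eq_fromCols_conjTranspose, fromBlocks_mul_fromRows,
    fromCols_mul_fromRows, Matrix.mul_add, Matrix.add_mul, conjTranspose_mul,
    conjTranspose_conjTranspose, conjTranspose_zero, conjTranspose_one, Matrix.zero_mul,
    Matrix.one_mul, Matrix.mul_one, add_zero, zero_add]
  abel

theorem posDef_graphForm_of_loop [DecidableEq η] [Ring R] [PartialOrder R] [StarRing R]
    [AddLeftMono R]
    {M11 : Matrix ρ η R} {M12 : Matrix ρ ω R} {M21 : Matrix ζ η R} {M22 : Matrix ζ ω R}
    {Z : Matrix ρ ρ R} {Y : Matrix η ρ R} {X : Matrix η η R}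
    {V : Matrix ζ ζ R} {P : Matrix ω ζ R} {W : Matrix ω ω R} {Δ : Matrix η ρ R} {A : Matrix ρ ω R}
    (hLMI : ((graphMatrix (fromBlocks M11 M12 M21 M22))ᴴ * jointMultiplier Z Y X V P W *
      graphMatrix (fromBlocks M11 M12 M21 M22)).PosDef)
    (hΔ : (-graphForm Z Y X Δ).PosSemidef) (hA : M11 * (Δ * A) + M12 = A) :
    (graphForm W Pᴴ V (M21 * (Δ * A) + M22)).PosDef := by
  set S := graphMatrix (fromBlocks M11 M12 M21 M22)
  set N := jointMultiplier Z Y X V P W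
  set L := graphMatrix (Δ * A)
  have h_traj : S * L = fromRows (fromRows A (M21 * (Δ * A) + M22)) L := by
    simp [S, L, graphMatrix, fromRows_mul, fromBlocks_mul_fromRows, hA]
  have h_split : Lᴴ * (Sᴴ * N * S) * L =
      Aᴴ * graphForm Z Y X Δ * A + graphForm W Pᴴ V (M21 * (Δ * A) + M22) := by
    rw [← conjTranspose_mul_jointMultiplier_mul, ← h_traj, conjTranspose_mul]
    simp only [N, Matrix.mul_assoc]
  have h_pos := hLMI.conjTranspose_mul_mul_same (mulVec_injective_graphMatrix (Δ * A))
  simpa [h_split, L] using h_pos.add_posSemidef (hΔ.conjTranspose_mul_mul_same A)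

theorem global_step_graph_separation_general [DecidableEq ρ] [DecidableEq η] [CommRing R]
    [PartialOrder R] [StarRing R] [AddLeftMono R]
    {M11 : Matrix ρ η R} {M12 : Matrix ρ ω R} {M21 : Matrix ζ η R} {M22 : Matrix ζ ω R}
    {Z : Matrix ρ ρ R} {Y : Matrix η ρ R} {X : Matrix η η R}
    {V : Matrix ζ ζ R} {P : Matrix ω ζ R} {W : Matrix ω ω R} {Δ : Matrix η ρ R}
    (hLMI : ((graphMatrix (fromBlocks M11 M12 M21 M22))ᴴ * jointMultiplier Z Y X V P W *
      graphMatrix (fromBlocks M11 M12 M21 M22)).PosDef)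
    (hΔ : (-graphForm Z Y X Δ).PosSemidef) (hU : IsUnit (1 - M11 * Δ)) :
    (graphForm W Pᴴ V (upperLFT M11 M12 M21 M22 Δ)).PosDef := by
  have hA : M11 * (Δ * ((1 - M11 * Δ)⁻¹ * M12)) + M12 = (1 - M11 * Δ)⁻¹ * M12 := by
    conv_rhs => rw [← mul_nonsing_inv_one_sub_add_one hU]
    simp [Matrix.add_mul, Matrix.mul_assoc]
  simpa [upperLFT, Matrix.mul_assoc, add_comm] using posDef_graphForm_of_loop hLMI hΔ hA

end LinearFractional

/-- Global step (graph-separation sufficiency): if there exist positive-definite diagonal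
multipliers `Tᵏ = diag(t k ·)` such that `[M; I]* 𝒩 [M; I] > 0`, then for every diagonal
`Δ = diag(Δᵢ)` with each `Δᵢ` `{xᵏᵢ, yᵏᵢ, zᵏᵢ}`-dissipative for all `k` and with
`I − M₁₁Δ` invertible, the largest singular value of
`M₂₂ + M₂₁Δ(I − M₁₁Δ)⁻¹M₁₂` is strictly less than `γ` (equivalently,
`γ²I − F*F` is positive definite for `F = M₂₂ + M₂₁Δ(I − M₁₁Δ)⁻¹M₁₂`). -/
theorem global_step_graph_separation {N Nd nw nz : ℕ} (γ : ℝ) (hγ : 0 < γ)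
    (M11 : Matrix (Fin N) (Fin N) ℂ) (M12 : Matrix (Fin N) (Fin nw) ℂ)
    (M21 : Matrix (Fin nz) (Fin N) ℂ) (M22 : Matrix (Fin nz) (Fin nw) ℂ)
    (x : Fin Nd → Fin N → ℝ) (y : Fin Nd → Fin N → ℂ) (z : Fin Nd → Fin N → ℝ)
    (t : Fin Nd → Fin N → ℝ) (ht : ∀ k i, 0 < t k i)
    (hLMI : ((stackMat M11 M12 M21 M22)ᴴ * Nmat (nw := nw) (nz := nz) γ x y z t *
      stackMat M11 M12 M21 M22).PosDef) :
    ∀ Δ : Fin N → ℂ,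
      (∀ i : Fin N, ∀ k : Fin Nd, Dissipative (x k i) (y k i) (z k i) (Δ i)) →
      IsUnit (1 - M11 * Matrix.diagonal Δ) →
      (((γ ^ 2 : ℝ) : ℂ) • (1 : Matrix (Fin nw) (Fin nw) ℂ) -
        (M22 + M21 * Matrix.diagonal Δ * (1 - M11 * Matrix.diagonal Δ)⁻¹ * M12)ᴴ *
        (M22 + M21 * Matrix.diagonal Δ * (1 - M11 * Matrix.diagonal Δ)⁻¹ * M12)).PosDef := by
  intro Δ hΔ hU
  have hΔ_neg := posSemidef_neg_graphForm_sum_diagonal (fun k i => (ht k i).le) fun k i => hΔ i k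
  rw [Nmat_eq_jointMultiplier] at hLMI
  simpa only [upperLFT, conjTranspose_zero, graphForm_zero_neg_one] using
    global_step_graph_separation_general hLMI hΔ_neg hU
end

section
/- Let x > 0, y ∈ ℂ, z ∈ ℝ with α := |y|²/x² − z/x > 0, and let θ ∈ ℝⁿ satisfy 1 + Z_D·θ ≠ 0. Then T(θ) = (e + Z_N·θ)/(1 + Z_D·θ) satisfies the dissipativity inequality x|T(θ)|² + 2Re(conj(y)·T(θ)) + z ≤ 0 if and only if the augmented real vector θ̄ = [θᵀ, 1]ᵀ satisfies θ̄ᵀ((1/α)·λ*λ − A₁)θ̄ ≤ 0, where λ = [Z_N + (y/x)Z_D , e + y/x] ∈ ℂ^{1×(n+1)} and A₁ = [[Z_D*Z_D, Z_D*],[Z_D, 1]] ∈ ℂ^{(n+1)×(n+1)}. -/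
open Matrix

/-- The augmented vector `θ̄ = [θᵀ, 1]ᵀ`, regarded as a complex vector. -/
def thetaBar {n : ℕ} (θ : Fin n → ℝ) : Fin n ⊕ Unit → ℂ :=
  Sum.elim (fun i => (θ i : ℂ)) (fun _ => (1 : ℂ))

/- Completing the square turns the supply `x|T|² + 2Re(ȳT) + z` into `x(|T + y/x|² - α)`. For
`T = (a·v)/(b·v)` the numerator of `T + y/x` is `(a + (y/x)b)·v`, so clearing the denominator
`|b·v|²` leaves a difference of two rank-one Hermitian forms in `v`. -/

theorem star_dotProduct_vecMulVec_star_mulVec {ι R : Type*} [Fintype ι] [NonUnitalSemiring R]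
    [StarRing R] (l v : ι → R) :
    star v ⬝ᵥ (vecMulVec (star l) l *ᵥ v) = star (l ⬝ᵥ v) * (l ⬝ᵥ v) := by
  rw [dotProduct_mulVec, vecMul_vecMulVec, smul_dotProduct, star_dotProduct_star, smul_eq_mul]

theorem add_smul_dotProduct_eq_div_add_mul {ι K : Type*} [Fintype ι] [DivisionRing K]
    {a b v : ι → K} (hb : b ⬝ᵥ v ≠ 0) (w : K) :
    (a + w • b) ⬝ᵥ v = (a ⬝ᵥ v / b ⬝ᵥ v + w) * (b ⬝ᵥ v) := by
  rw [add_mul, div_mul_cancel₀ _ hb, add_dotProduct, smul_dotProduct, smul_eq_mul]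

section RCLike

open RCLike

variable {𝕜 : Type*} [RCLike 𝕜]

theorem mul_norm_sq_add_two_mul_re_inner_add_eq {E : Type*} [SeminormedAddCommGroup E]
    [InnerProductSpace 𝕜 E] {x : ℝ} (hx : x ≠ 0) (y t : E) (z : ℝ) :
    x * ‖t‖ ^ 2 + 2 * re (inner 𝕜 y t) + z =
      x * (‖t + (x : 𝕜)⁻¹ • y‖ ^ 2 - (‖y‖ ^ 2 / x ^ 2 - z / x)) := by
  have cross_term : re (inner 𝕜 t ((x : 𝕜)⁻¹ • y)) = x⁻¹ * re (inner 𝕜 y t) := by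
    rw [inner_smul_right, ← ofReal_inv, re_ofReal_mul, inner_re_symm]
  have square_term : ‖(x : 𝕜)⁻¹ • y‖ ^ 2 = ‖y‖ ^ 2 / x ^ 2 := by
    rw [norm_smul, norm_inv, norm_ofReal, mul_pow, inv_pow, sq_abs, inv_mul_eq_div]
  rw [norm_add_sq (𝕜 := 𝕜), cross_term, square_term]
  field

variable {ι : Type*} [Fintype ι]

theorem re_star_dotProduct_smul_vecMulVec_sub_vecMulVec_mulVec (c : ℝ) (l b v : ι → 𝕜) :
    re (star v ⬝ᵥ (((c : 𝕜) • vecMulVec (star l) l - vecMulVec (star b) b) *ᵥ v)) =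
      c * ‖l ⬝ᵥ v‖ ^ 2 - ‖b ⬝ᵥ v‖ ^ 2 := by
  have re_star_mul_self (w : 𝕜) : re (star w * w) = ‖w‖ ^ 2 := by
    rw [star_def, RCLike.conj_mul, ← ofReal_pow, ofReal_re]
  rw [sub_mulVec, dotProduct_sub, smul_mulVec, dotProduct_smul, smul_eq_mul,
    star_dotProduct_vecMulVec_star_mulVec, star_dotProduct_vecMulVec_star_mulVec, map_sub,
    re_ofReal_mul, re_star_mul_self, re_star_mul_self]

theorem dissipative_iff_quadratic_general {x z α : ℝ} {y : 𝕜}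
    (hα : α = ‖y‖ ^ 2 / x ^ 2 - z / x) (hxα : 0 < x * α) {a b v : ι → 𝕜} (hb : b ⬝ᵥ v ≠ 0) :
    x * ‖a ⬝ᵥ v / b ⬝ᵥ v‖ ^ 2 + 2 * re (starRingEnd 𝕜 y * (a ⬝ᵥ v / b ⬝ᵥ v)) + z ≤ 0 ↔
      re (star v ⬝ᵥ (((α : 𝕜)⁻¹ • vecMulVec (star (a + (y / x) • b)) (a + (y / x) • b) -
        vecMulVec (star b) b) *ᵥ v)) ≤ 0 := by
  have hx : x ≠ 0 := left_ne_zero_of_mul hxα.ne'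
  have hα_ne : α ≠ 0 := right_ne_zero_of_mul hxα.ne'
  set T := a ⬝ᵥ v / b ⬝ᵥ v with hT
  have supply_eq : x * ‖T‖ ^ 2 + 2 * re (starRingEnd 𝕜 y * T) + z =
      x * (‖T + y / x‖ ^ 2 - α) := by
    rw [hα, mul_comm _ T, ← inner_apply, mul_norm_sq_add_two_mul_re_inner_add_eq hx,
      smul_eq_mul, inv_mul_eq_div]
  have form_eq : re (star v ⬝ᵥ (((α : 𝕜)⁻¹ • vecMulVec (star (a + (y / x) • b))
      (a + (y / x) • b) - vecMulVec (star b) b) *ᵥ v)) =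
      ‖b ⬝ᵥ v‖ ^ 2 / (x * α) * (x * (‖T + y / x‖ ^ 2 - α)) := by
    rw [← ofReal_inv, re_star_dotProduct_smul_vecMulVec_sub_vecMulVec_mulVec,
      add_smul_dotProduct_eq_div_add_mul hb, ← hT, norm_mul]
    field
  have factor_pos : 0 < ‖b ⬝ᵥ v‖ ^ 2 / (x * α) := by positivity
  rw [supply_eq, form_eq, ← smul_eq_mul (_ / _), smul_nonpos_iff_nonpos_of_pos_left factor_pos]

end RCLike

theorem A1mat_eq_vecMulVec_s6 {n : ℕ} (ZD : Fin n → ℂ) :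
    A1mat ZD = vecMulVec (star (Sum.elim ZD fun _ => 1)) (Sum.elim ZD fun _ => 1) := by
  ext (i | i) (j | j) <;> simp [A1mat, vecMulVec_apply]

theorem sumElim_dotProduct_thetaBar {n : ℕ} (Z : Fin n → ℂ) (c : ℂ) (θ : Fin n → ℝ) :
    Sum.elim Z (fun _ => c) ⬝ᵥ thetaBar θ = c + ∑ i, Z i * (θ i : ℂ) := by
  simp [thetaBar, dotProduct, add_comm]

theorem Tval_eq_dotProduct_div_dotProduct {n : ℕ} (e : ℂ) (ZN ZD : Fin n → ℂ) (θ : Fin n → ℝ) :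
    Tval e ZN ZD θ = Sum.elim ZN (fun _ => e) ⬝ᵥ thetaBar θ /
      Sum.elim ZD (fun _ => 1) ⬝ᵥ thetaBar θ := by
  rw [Tval, sumElim_dotProduct_thetaBar, sumElim_dotProduct_thetaBar]

theorem lamVec_eq_add_smul {n : ℕ} (e : ℂ) (ZN ZD : Fin n → ℂ) (x : ℝ) (y : ℂ) :
    lamVec e ZN ZD x y =
      Sum.elim ZN (fun _ => e) + (y / (x : ℂ)) • Sum.elim ZD (fun _ => 1) := by
  ext (i | i) <;> simp [lamVec]

/-- Let `x > 0`, `α := |y|²/x² − z/x > 0` and `1 + Z_D·θ ≠ 0`.  Then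
`T(θ) = (e + Z_N·θ)/(1 + Z_D·θ)` satisfies `x|T(θ)|² + 2Re(conj(y)·T(θ)) + z ≤ 0` iff the
augmented real vector `θ̄ = [θᵀ, 1]ᵀ` satisfies `θ̄ᵀ((1/α)λ*λ − A₁)θ̄ ≤ 0`, where
`λ = [Z_N + (y/x)Z_D , e + y/x]`. -/
theorem dissipative_iff_quadratic {n : ℕ} (e : ℂ) (ZN ZD : Fin n → ℂ)
    (x : ℝ) (hx : 0 < x) (y : ℂ) (z : ℝ)
    (α : ℝ) (hαdef : α = Complex.normSq y / x ^ 2 - z / x) (hα : 0 < α)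
    (θ : Fin n → ℝ) (hden : (1 : ℂ) + ∑ i, ZD i * (θ i : ℂ) ≠ 0) :
    x * Complex.normSq (Tval e ZN ZD θ) +
        2 * (starRingEnd ℂ y * Tval e ZN ZD θ).re + z ≤ 0 ↔
      (star (thetaBar θ) ⬝ᵥ
          ((((α : ℂ))⁻¹ •
              Matrix.vecMulVec (star (lamVec e ZN ZD x y)) (lamVec e ZN ZD x y) -
            A1mat ZD) *ᵥ thetaBar θ)).re ≤ 0 := by
  rw [Complex.normSq_eq_norm_sq] at hαdef ⊢
  rw [A1mat_eq_vecMulVec_s6, lamVec_eq_add_smul, Tval_eq_dotProduct_div_dotProduct]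
  exact dissipative_iff_quadratic_general hαdef (mul_pos hx hα)
    (by rwa [sumElim_dotProduct_thetaBar])
end
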